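/- There exist constants ϑ₀ ∈ (0, 1) and C > 0 such that for every ϑ ∈ [0, ϑ₀], the Kullback–Leibler divergence between the law of |1 + ϑ·U|·Z and the standard Gaussian law satisfies D( law(|1 + ϑU|·Z) ‖ N(0,1) ) ≤ C·ϑ⁴. -/

import Mathlib

open MeasureTheory ProbabilityTheory

/-- The Kullback–Leibler divergence `D(P ‖ Q) = ∫ log(dP/dQ) dP` (natural logarithm). -/
noncomputable def klDivergence {α : Type*} [MeasurableSpace α]
    (P Q : Measure α) : ℝ :=
  ∫ x, Real.log ((P.rnDeriv Q x).toReal) ∂P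

open scoped ENNReal NNReal

/-- density ratio of N(0,s²) with respect to N(0,1) -/
noncomputable def ratioK (s x : ℝ) : ℝ≥0∞ :=
  ENNReal.ofReal (s⁻¹ * Real.exp (x ^ 2 / 2 * (1 - (s ^ 2)⁻¹)))

lemma measurable_ratioK : Measurable (fun p : ℝ × ℝ => ratioK p.1 p.2) := by
  unfold ratioK
  fun_prop

lemma gaussian_scale (s : ℝ) (hs : 0 < s) :
    Measure.map (fun z => |s| * z) (gaussianReal 0 1)
      = (gaussianReal 0 1).withDensity (ratioK s) := by
  rw [gaussianReal_map_const_mul, abs_of_pos hs]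
  have hv : (NNReal.mk (s ^ 2) (sq_nonneg _) * 1 : ℝ≥0) ≠ 0 := by
    intro h
    have := congrArg NNReal.toReal h
    simp at this
    exact hs.ne' this
  rw [gaussianReal_of_var_ne_zero _ hv, gaussianReal_of_var_ne_zero _ one_ne_zero,
    ← withDensity_mul (g := ratioK s) _ (measurable_gaussianPDF 0 1)
      (measurable_ratioK.comp (measurable_const.prodMk measurable_id))]
  congr 1
  ext x
  simp only [Pi.mul_apply, gaussianPDF, ratioK, gaussianPDFReal]
  rw [← ENNReal.ofReal_mul (by positivity)]
  congr 1
  have h1 : √(2 * Real.pi * (s ^ 2)) = √(2 * Real.pi) * s := by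
    rw [Real.sqrt_mul (by positivity), Real.sqrt_sq hs.le]
  simp only [NNReal.coe_mul, NNReal.coe_mk, NNReal.coe_one, mul_one, mul_zero, sub_zero]
  rw [h1, mul_inv]
  have : Real.exp (-x ^ 2 / (2 * s ^ 2)) =
      Real.exp (-x ^ 2 / 2) * Real.exp (x ^ 2 / 2 * (1 - (s ^ 2)⁻¹)) := by
    rw [← Real.exp_add]
    congr 1
    field_simp
    ring
  rw [this]
  ring

lemma lintegral_gaussian_exp (c : ℝ) (hc : c < 1) :
    ∫⁻ z, ENNReal.ofReal (Real.exp (c * z ^ 2 / 2)) ∂(gaussianReal 0 1)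
      = ENNReal.ofReal (√(1 - c))⁻¹ := by
  rw [gaussianReal_of_var_ne_zero _ one_ne_zero,
    lintegral_withDensity_eq_lintegral_mul _ (measurable_gaussianPDF 0 1) (by fun_prop)]
  have hb : 0 < (1 - c) / 2 := by linarith
  have h1 : ∀ z, (gaussianPDF 0 1 * fun z => ENNReal.ofReal (Real.exp (c * z ^ 2 / 2))) z
      = ENNReal.ofReal ((√(2 * Real.pi))⁻¹ * Real.exp (-((1 - c) / 2) * z ^ 2)) := by
    intro z
    simp only [Pi.mul_apply, gaussianPDF, gaussianPDFReal]
    rw [← ENNReal.ofReal_mul (by positivity)]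
    congr 1
    simp only [NNReal.coe_one, mul_one, sub_zero]
    rw [mul_assoc, ← Real.exp_add]
    congr 2
    ring
  simp_rw [h1]
  rw [← ofReal_integral_eq_lintegral_ofReal ((integrable_exp_neg_mul_sq hb).const_mul _)
    (Filter.Eventually.of_forall fun z => by positivity), integral_const_mul, integral_gaussian]
  congr 1
  have : Real.pi / ((1 - c) / 2) = (2 * Real.pi) * (1 - c)⁻¹ := by
    field_simp
  have h2 : √(2 * Real.pi) ≠ 0 := by positivity
  rw [this, Real.sqrt_mul (by positivity : 0 ≤ 2 * Real.pi) (1 - c)⁻¹, Real.sqrt_inv, ← mul_assoc, inv_mul_cancel₀ h2, one_mul]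

lemma inv_sqrt_bound (y : ℝ) (hy : y ≤ 1 / 2) :
    (√(1 - y))⁻¹ ≤ 1 + y / 2 + y ^ 2 := by
  have h0 : 0 < 1 + y / 2 + y ^ 2 := by nlinarith [sq_nonneg (y + 1 / 4)]
  have h1 : 0 < √(1 - y) := Real.sqrt_pos.2 (by linarith)
  rw [inv_le_comm₀ h1 h0]
  apply Real.le_sqrt_of_sq_le
  rw [inv_pow, inv_le_comm₀ (by positivity) (by linarith), inv_le_iff_one_le_mul₀ (by linarith)]
  have h3 : 0 ≤ 5 / 4 - 5 / 4 * y - y ^ 3 := by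
    rcases le_total y 0 with h | h
    · nlinarith [pow_nonneg (neg_nonneg.2 h) 3]
    · nlinarith [pow_le_pow_left₀ h hy 3]
  nlinarith [mul_nonneg (sq_nonneg y) h3]

lemma lintegral_ratioK (s t : ℝ) (hs : 0 < s) (h : (s ^ 2 - 1) * (t ^ 2 - 1) ≤ 1 / 2) :
    ∫⁻ z, ratioK s (|t| * z) ∂(gaussianReal 0 1) ≤
      ENNReal.ofReal (1 + ((s ^ 2 - 1) * (t ^ 2 - 1)) / 2 + ((s ^ 2 - 1) * (t ^ 2 - 1)) ^ 2) := by
  have hc : t ^ 2 * (1 - (s ^ 2)⁻¹) < 1 := by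
    have : t ^ 2 * (1 - (s ^ 2)⁻¹) = 1 - (1 - (s ^ 2 - 1) * (t ^ 2 - 1)) / s ^ 2 := by
      field_simp
      ring
    rw [this]
    have : 0 < (1 - (s ^ 2 - 1) * (t ^ 2 - 1)) / s ^ 2 := div_pos (by linarith) (by positivity)
    linarith
  have h1 : ∀ z, ratioK s (|t| * z) = ENNReal.ofReal s⁻¹ *
      ENNReal.ofReal (Real.exp ((t ^ 2 * (1 - (s ^ 2)⁻¹)) * z ^ 2 / 2)) := by
    intro z
    rw [ratioK, ENNReal.ofReal_mul (by positivity)]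
    congr 3
    rw [mul_pow, sq_abs]
    ring
  simp_rw [h1]
  rw [lintegral_const_mul _ (by fun_prop), lintegral_gaussian_exp _ hc,
    ← ENNReal.ofReal_mul (by positivity)]
  apply ENNReal.ofReal_le_ofReal
  refine le_trans (le_of_eq ?_) (inv_sqrt_bound _ h)
  rw [← mul_inv]
  congr 1
  nth_rewrite 1 [← Real.sqrt_sq hs.le]
  rw [← Real.sqrt_mul (by positivity)]
  congr 1
  field_simp
  ring

/-- scale mixture -/
noncomputable def mixK (ρ : Measure ℝ) (x : ℝ) : ℝ≥0∞ := ∫⁻ s, ratioK s x ∂ρ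

lemma measurable_mixK (ρ : Measure ℝ) [IsProbabilityMeasure ρ] : Measurable (mixK ρ) := by
  unfold mixK
  exact measurable_ratioK.lintegral_prod_left'

lemma lintegral_mix (ρ : Measure ℝ) [IsProbabilityMeasure ρ] (f : ℝ → ℝ≥0∞) (hf : Measurable f) :
    ∫⁻ x, f x ∂(Measure.map (fun p : ℝ × ℝ => |p.1| * p.2) (ρ.prod (gaussianReal 0 1)))
      = ∫⁻ s, ∫⁻ z, f (|s| * z) ∂(gaussianReal 0 1) ∂ρ := by
  rw [lintegral_map hf (by fun_prop), lintegral_prod _ (by fun_prop)]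

lemma mix_density (ρ : Measure ℝ) [IsProbabilityMeasure ρ] (hρ : ∀ᵐ s ∂ρ, 0 < s) :
    Measure.map (fun p : ℝ × ℝ => |p.1| * p.2) (ρ.prod (gaussianReal 0 1))
      = (gaussianReal 0 1).withDensity (mixK ρ) := by
  ext A hA
  rw [← lintegral_indicator_one hA, lintegral_mix _ _ (measurable_one.indicator hA),
    withDensity_apply _ hA]
  unfold mixK
  rw [lintegral_lintegral_swap (f := fun a s => ratioK s a)
    (measurable_ratioK.comp measurable_swap).aemeasurable]
  apply lintegral_congr_ae
  filter_upwards [hρ] with s hs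
  rw [← withDensity_apply _ hA, ← gaussian_scale s hs, ← lintegral_indicator_one hA,
    lintegral_map (measurable_one.indicator hA) (by fun_prop)]

lemma mix_chi (ρ : Measure ℝ) [IsProbabilityMeasure ρ] (hρ : ∀ᵐ s ∂ρ, 3 / 4 ≤ s ∧ s ≤ 5 / 4)
    (ε : ℝ) (h1 : ∫ s, (s ^ 2 - 1) ∂ρ = ε) (h2 : ∫ s, (s ^ 2 - 1) ^ 2 ∂ρ ≤ 81 / 16 * ε) :
    ∫⁻ x, mixK ρ x ∂(Measure.map (fun p : ℝ × ℝ => |p.1| * p.2) (ρ.prod (gaussianReal 0 1)))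
      ≤ ENNReal.ofReal (1 + 27 * ε ^ 2) := by
  have hb : ∀ᵐ s ∂ρ, |s ^ 2 - 1| ≤ 9 / 16 := by
    filter_upwards [hρ] with s hs
    rw [abs_le]
    constructor <;> nlinarith
  have i1 : Integrable (fun s : ℝ => s ^ 2 - 1) ρ :=
    Integrable.of_bound (by fun_prop) (9 / 16) hb
  have i2 : Integrable (fun s : ℝ => (s ^ 2 - 1) ^ 2) ρ := by
    refine Integrable.of_bound (by fun_prop) (9 / 16) ?_
    filter_upwards [hb] with s hs
    rw [norm_pow, Real.norm_eq_abs]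
    nlinarith [abs_nonneg (s ^ 2 - 1)]
  set V := ∫ s, (s ^ 2 - 1) ^ 2 ∂ρ with hV
  have key : ∀ y : ℝ, 0 ≤ 1 + y / 2 + y ^ 2 := fun y => by nlinarith [sq_nonneg (y + 1 / 4)]
  rw [lintegral_mix _ _ (measurable_mixK ρ)]
  have inner : ∀ t : ℝ, Integrable (fun s : ℝ => 1 + ((s ^ 2 - 1) * (t ^ 2 - 1)) / 2
        + ((s ^ 2 - 1) * (t ^ 2 - 1)) ^ 2) ρ ∧
      ∫ s, (1 + ((s ^ 2 - 1) * (t ^ 2 - 1)) / 2 + ((s ^ 2 - 1) * (t ^ 2 - 1)) ^ 2) ∂ρ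
        = 1 + ε / 2 * (t ^ 2 - 1) + V * (t ^ 2 - 1) ^ 2 := by
    intro t
    have e : (fun s : ℝ => 1 + ((s ^ 2 - 1) * (t ^ 2 - 1)) / 2 + ((s ^ 2 - 1) * (t ^ 2 - 1)) ^ 2)
        = fun s : ℝ => (1 + (s ^ 2 - 1) * ((t ^ 2 - 1) / 2)) + (s ^ 2 - 1) ^ 2 * (t ^ 2 - 1) ^ 2 := by
      ext s
      ring
    have j1 : Integrable (fun s : ℝ => 1 + (s ^ 2 - 1) * ((t ^ 2 - 1) / 2)) ρ :=
      (integrable_const _).add (i1.mul_const _)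
    have j2 : Integrable (fun s : ℝ => (s ^ 2 - 1) ^ 2 * (t ^ 2 - 1) ^ 2) ρ := i2.mul_const _
    rw [e]
    refine ⟨j1.add j2, ?_⟩
    rw [integral_add j1 j2, integral_add (integrable_const _) (i1.mul_const _),
      integral_mul_const, integral_mul_const, h1, ← hV]
    simp
    ring
  calc _ ≤ ∫⁻ t, ENNReal.ofReal (1 + ε / 2 * (t ^ 2 - 1) + V * (t ^ 2 - 1) ^ 2) ∂ρ := by
        apply lintegral_mono_ae
        filter_upwards [hb] with t ht
        unfold mixK
        rw [lintegral_lintegral_swap (by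
          exact (measurable_ratioK.comp (measurable_snd.prodMk
            (measurable_const.mul measurable_fst))).aemeasurable)]
        rw [← (inner t).2, ofReal_integral_eq_lintegral_ofReal (inner t).1
          (Filter.Eventually.of_forall fun s => key _)]
        apply lintegral_mono_ae
        filter_upwards [hb, hρ] with s hs hs'
        apply lintegral_ratioK s t (by linarith)
        refine (le_abs_self _).trans ?_
        rw [abs_mul]
        nlinarith [abs_nonneg (s ^ 2 - 1), abs_nonneg (t ^ 2 - 1)]
    _ = ENNReal.ofReal (1 + ε / 2 * ε + V * V) := by
        have j1 : Integrable (fun t : ℝ => 1 + ε / 2 * (t ^ 2 - 1)) ρ :=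
          (integrable_const _).add (i1.const_mul _)
        have j2 : Integrable (fun t : ℝ => V * (t ^ 2 - 1) ^ 2) ρ := i2.const_mul _
        rw [← ofReal_integral_eq_lintegral_ofReal
          (f := fun t => 1 + ε / 2 * (t ^ 2 - 1) + V * (t ^ 2 - 1) ^ 2) (j1.add j2)]
        · congr 1
          rw [integral_add j1 j2, integral_add (integrable_const _) (i1.const_mul _),
            integral_const_mul, integral_const_mul, h1, ← hV]
          simp
        · refine Filter.Eventually.of_forall fun t => ?_
          simp only [Pi.zero_apply]
          rw [← (inner t).2]
          exact integral_nonneg fun s => key _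
    _ ≤ _ := by
        apply ENNReal.ofReal_le_ofReal
        have hV0 : 0 ≤ V := integral_nonneg fun s => sq_nonneg _
        nlinarith [mul_le_mul h2 h2 hV0 (hV0.trans h2)]

lemma kl_mix (μ γ : Measure ℝ) [IsProbabilityMeasure μ] [IsProbabilityMeasure γ]
    (L : ℝ → ℝ≥0∞) (hL : Measurable L) (hμ : μ = γ.withDensity L) (δ : ℝ) (hδ : 0 ≤ δ)
    (hchi : ∫⁻ x, L x ∂μ ≤ ENNReal.ofReal (1 + δ)) : klDivergence μ γ ≤ δ := by
  unfold klDivergence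
  have hac : μ ≪ γ := hμ ▸ withDensity_absolutelyContinuous _ _
  have hrn : μ.rnDeriv γ =ᵐ[μ] L := by
    apply hac.ae_le
    rw [hμ]
    exact Measure.rnDeriv_withDensity γ hL
  by_cases hi : Integrable (fun x => Real.log ((μ.rnDeriv γ x).toReal)) μ
  swap
  · rwa [integral_undef hi]
  have hfin : ∫⁻ x, L x ∂μ ≠ ∞ := (hchi.trans_lt ENNReal.ofReal_lt_top).ne
  have hLi : Integrable (fun x => (L x).toReal) μ :=
    integrable_toReal_of_lintegral_ne_top hL.aemeasurable hfin
  have h3 : ∫ x, (L x).toReal ∂μ ≤ 1 + δ := by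
    rw [integral_toReal hL.aemeasurable (ae_lt_top hL hfin)]
    exact ENNReal.toReal_le_of_le_ofReal (by linarith) hchi
  calc _ ≤ ∫ x, ((L x).toReal - 1) ∂μ := by
        apply integral_mono_ae hi (hLi.sub (integrable_const _))
        have hpos : ∀ᵐ x ∂μ, 0 < μ.rnDeriv γ x := Measure.rnDeriv_pos hac
        filter_upwards [hrn, hpos, ae_lt_top hL hfin] with x hx hp ht
        rw [hx] at hp
        simp only [hx]
        exact Real.log_le_sub_one_of_pos (ENNReal.toReal_pos hp.ne' ht.ne)
    _ = ∫ x, (L x).toReal ∂μ - 1 := by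
        rw [integral_sub hLi (integrable_const _)]
        simp
    _ ≤ δ := by linarith

/-- Let `Z` be standard Gaussian and `U` independent of `Z`, with
bounded support, symmetric law, mean `0` and second moment `1`. Then there exist
`ϑ₀ ∈ (0,1)` and `C > 0` such that for every `ϑ ∈ [0,ϑ₀]`,
`D(law(|1 + ϑU|·Z) ‖ N(0,1)) ≤ C ϑ⁴`. -/
theorem statement9
    {Ω : Type*} [MeasurableSpace Ω] (P : Measure Ω) [IsProbabilityMeasure P]
    (Z U : Ω → ℝ) (hZm : Measurable Z) (hUm : Measurable U)
    (hZ : Measure.map Z P = gaussianReal 0 1)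
    (hindep : IndepFun U Z P)
    (M : ℝ) (hM : ∀ᵐ ω ∂P, |U ω| ≤ M)
    (hsymm : Measure.map (fun ω => -U ω) P = Measure.map U P)
    (hmean : ∫ ω, U ω ∂P = 0)
    (hvar : ∫ ω, (U ω) ^ 2 ∂P = 1) :
    ∃ ϑ₀ C : ℝ, 0 < ϑ₀ ∧ ϑ₀ < 1 ∧ 0 < C ∧
      ∀ ϑ : ℝ, 0 ≤ ϑ → ϑ ≤ ϑ₀ →
        klDivergence (Measure.map (fun ω => |1 + ϑ * U ω| * Z ω) P) (gaussianReal 0 1) ≤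
          C * ϑ ^ 4 := by
  have hMp : 0 < |M| + 1 := by positivity
  refine ⟨1 / (4 * (|M| + 1)), 27, by positivity, ?_, by norm_num, ?_⟩
  · rw [div_lt_one (by positivity)]
    nlinarith [abs_nonneg M]
  intro θ h0 hθ
  have hSm : Measurable (fun ω => 1 + θ * U ω) := by fun_prop
  set ρ := Measure.map (fun ω => 1 + θ * U ω) P with hρdef
  have : IsProbabilityMeasure ρ := Measure.isProbabilityMeasure_map hSm.aemeasurable
  have hθM : θ * (|M| + 1) ≤ 1 / 4 := by
    rw [le_div_iff₀ (by positivity)] at hθ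
    linarith
  have hU : ∀ᵐ ω ∂P, |θ * U ω| ≤ 1 / 4 := by
    filter_upwards [hM] with ω hω
    rw [abs_mul, abs_of_nonneg h0]
    nlinarith [le_abs_self M]
  have hρ : ∀ᵐ s ∂ρ, 3 / 4 ≤ s ∧ s ≤ 5 / 4 := by
    rw [hρdef, ae_map_iff hSm.aemeasurable
      (measurableSet_Icc (a := (3 / 4 : ℝ)) (b := 5 / 4))]
    filter_upwards [hU] with ω hω
    have := abs_le.1 hω
    constructor <;> linarith
  have hjoint : Measure.map (fun ω => |1 + θ * U ω| * Z ω) P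
      = Measure.map (fun p : ℝ × ℝ => |p.1| * p.2) (ρ.prod (gaussianReal 0 1)) := by
    have hi : IndepFun (fun ω => 1 + θ * U ω) Z P :=
      hindep.comp (φ := fun u => 1 + θ * u) (ψ := id) (by fun_prop) measurable_id
    rw [indepFun_iff_map_prod_eq_prod_map_map hSm.aemeasurable hZm.aemeasurable] at hi
    rw [← hZ, hρdef, ← hi, Measure.map_map (by fun_prop) (by fun_prop)]
    rfl
  have iU : Integrable U P := Integrable.of_bound hUm.aestronglyMeasurable M hM
  have iU2 : Integrable (fun ω => U ω ^ 2) P := by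
    refine Integrable.of_bound (by fun_prop) (M ^ 2) ?_
    filter_upwards [hM] with ω hω
    rw [norm_pow, Real.norm_eq_abs]
    exact pow_le_pow_left₀ (abs_nonneg _) hω 2
  have h1 : ∫ s, (s ^ 2 - 1) ∂ρ = θ ^ 2 := by
    rw [hρdef, integral_map hSm.aemeasurable (by fun_prop)]
    have : ∀ ω, (1 + θ * U ω) ^ 2 - 1 = 2 * θ * U ω + θ ^ 2 * U ω ^ 2 := fun ω => by ring
    simp_rw [this]
    rw [integral_add (iU.const_mul _) (iU2.const_mul _), integral_const_mul, integral_const_mul,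
      hmean, hvar]
    ring
  have h2 : ∫ s, (s ^ 2 - 1) ^ 2 ∂ρ ≤ 81 / 16 * θ ^ 2 := by
    rw [hρdef, integral_map hSm.aemeasurable (by fun_prop)]
    calc _ ≤ ∫ ω, 81 / 16 * θ ^ 2 * U ω ^ 2 ∂P := by
          apply integral_mono_of_nonneg (Filter.Eventually.of_forall fun ω => by positivity)
            (iU2.const_mul _)
          filter_upwards [hU] with ω hω
          have := abs_le.1 hω
          have e : ((1 + θ * U ω) ^ 2 - 1) ^ 2 = (θ * U ω) ^ 2 * (2 + θ * U ω) ^ 2 := by ring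
          have e2 : (2 + θ * U ω) ^ 2 ≤ 81 / 16 := by nlinarith
          simp only [e]
          nlinarith [mul_le_mul_of_nonneg_left e2 (sq_nonneg (θ * U ω))]
      _ = _ := by rw [integral_const_mul, hvar, mul_one]
  have hpm : IsProbabilityMeasure
      (Measure.map (fun p : ℝ × ℝ => |p.1| * p.2) (ρ.prod (gaussianReal 0 1))) :=
    Measure.isProbabilityMeasure_map (by fun_prop)
  rw [hjoint]
  refine (kl_mix _ _ (mixK ρ) (measurable_mixK ρ)
    (mix_density ρ (hρ.mono fun s hs => by linarith [hs.1])) (27 * (θ ^ 2) ^ 2) (by positivity)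
    (mix_chi ρ hρ _ h1 h2)).trans (le_of_eq (by ring))
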